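/- For α ≥ 1/2, λ ≥ 0 and every n ≥ 1, all zeros of the monic Gegenbauer–Sobolev polynomial Q_{n,λ}^{(α)} are contained in the interval [-1, 1]. -/

import Mathlib

open Polynomial MeasureTheory Real Set

/-- The Gegenbauer inner product `∫ f g (1-x²)^{α-1/2}` on `(-1,1)`. -/
noncomputable def gegInner (α : ℝ) (f g : Polynomial ℝ) : ℝ :=
  ∫ x in Set.Ioo (-1 : ℝ) 1, f.eval x * g.eval x * (1 - x ^ 2) ^ (α - 1/2)

/-- `C` is the monic Gegenbauer polynomial of degree `n` for parameter `α`. -/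
def IsMonicGegenbauer (α : ℝ) (n : ℕ) (C : Polynomial ℝ) : Prop :=
  C.Monic ∧ C.natDegree = n ∧
    ∀ p : Polynomial ℝ, p.degree < (n : ℕ) → gegInner α C p = 0

/-- The Gegenbauer–Sobolev inner product. -/
noncomputable def sobInner (α lam : ℝ) (f g : Polynomial ℝ) : ℝ :=
  gegInner α f g + lam * gegInner α (derivative f) (derivative g)

/-- `Q` is the monic Gegenbauer–Sobolev polynomial of degree `n`. -/
def IsMonicGegSobolev (α lam : ℝ) (n : ℕ) (Q : Polynomial ℝ) : Prop :=
  Q.Monic ∧ Q.natDegree = n ∧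
    ∀ p : Polynomial ℝ, p.degree < (n : ℕ) → sobInner α lam Q p = 0


/-- The companion functional, built from the weight functional and the derivative. -/
noncomputable def gsL (a : ℝ) (I : ℝ[X] →ₗ[ℝ] ℝ) (f : ℝ[X]) : ℝ :=
  I (C (2 * a + 1) * f + X * derivative f)

/-- The properties of the weight functional which are used. -/
structure GsGood (a : ℝ) (I : ℝ[X] →ₗ[ℝ] ℝ) : Prop where
  ha : 0 ≤ a
  ibp : ∀ h : ℝ[X], I ((1 - X ^ 2) * derivative h - C (2 * (a + 1)) * X * h) = 0
  pos : ∀ f : ℝ[X], f ≠ 0 → (∀ x ∈ Set.Icc (-1 : ℝ) 1, 0 ≤ f.eval x) → 0 < I f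
  symm : ∀ f : ℝ[X], I (f.comp (-X)) = I f
  Lpos : ∀ F : ℝ[X], (∀ x ∈ Set.Icc (-1 : ℝ) 1, 0 ≤ F.eval x) →
    (F.eval 1 + F.eval (-1)) * (0 : ℝ) ^ a ≤ gsL a I F

section Analytic

lemma gs_w_cont {a : ℝ} (ha : 0 ≤ a) : Continuous (fun x : ℝ => (1 - x ^ 2) ^ a) :=
  Continuous.rpow_const (by fun_prop) (fun _ => Or.inr ha)

lemma gs_int {a : ℝ} (ha : 0 ≤ a) (f : ℝ[X]) (u v : ℝ) :
    IntervalIntegrable (fun x : ℝ => f.eval x * (1 - x ^ 2) ^ a) volume u v :=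
  (f.continuous.mul (gs_w_cont ha)).intervalIntegrable _ _

/-- the weight functional -/
noncomputable def gsI (a : ℝ) (ha : 0 ≤ a) : ℝ[X] →ₗ[ℝ] ℝ where
  toFun f := ∫ x in (-1 : ℝ)..1, f.eval x * (1 - x ^ 2) ^ a
  map_add' f g := by
    rw [← intervalIntegral.integral_add (gs_int ha f _ _) (gs_int ha g _ _)]
    congr 1; ext x; simp; ring
  map_smul' c f := by
    simp only [RingHom.id_apply, smul_eq_mul]
    rw [← intervalIntegral.integral_const_mul]
    congr 1; ext x; simp; ring

lemma gsI_apply (a : ℝ) (ha : 0 ≤ a) (f : ℝ[X]) :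
    gsI a ha f = ∫ x in (-1 : ℝ)..1, f.eval x * (1 - x ^ 2) ^ a := rfl

lemma gsI_geg (α : ℝ) (ha : 0 ≤ α - 1 / 2) (f g : ℝ[X]) :
    gegInner α f g = gsI (α - 1 / 2) ha (f * g) := by
  rw [gsI_apply, intervalIntegral.integral_of_le (by norm_num), gegInner,
    MeasureTheory.integral_Ioc_eq_integral_Ioo]
  simp

lemma gsI_ibp (a : ℝ) (ha : 0 ≤ a) (h : ℝ[X]) :
    gsI a ha ((1 - X ^ 2) * derivative h - C (2 * (a + 1)) * X * h) = 0 := by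
  rw [gsI_apply]
  have key : ∀ x ∈ Set.uIcc (-1 : ℝ) 1, HasDerivAt (fun x : ℝ => (1 - x ^ 2) ^ (a + 1) * h.eval x)
      (((1 - X ^ 2) * derivative h - C (2 * (a + 1)) * X * h).eval x * (1 - x ^ 2) ^ a) x := by
    intro x hx
    rw [Set.uIcc_of_le (by norm_num)] at hx
    have h0 : (0 : ℝ) ≤ 1 - x ^ 2 := by nlinarith [hx.1, hx.2]
    have h1 : HasDerivAt (fun x : ℝ => 1 - x ^ 2) (-(2 * x)) x := by
      simpa using (hasDerivAt_pow 2 x).const_sub 1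
    have h2 := (h1.rpow_const (p := a + 1) (Or.inr (by linarith))).mul (h.hasDerivAt x)
    refine h2.congr_deriv ?_
    rw [Real.rpow_add_one' h0 (by linarith)]
    simp only [add_sub_cancel_right, eval_sub, eval_mul, eval_one, eval_pow, eval_X, eval_C]
    ring
  rw [intervalIntegral.integral_eq_sub_of_hasDerivAt key (gs_int ha _ _ _)]
  have : a + 1 ≠ 0 := by linarith
  norm_num [Real.zero_rpow this]

lemma gsI_pos (a : ℝ) (ha : 0 ≤ a) (f : ℝ[X]) (hf : f ≠ 0)
    (h : ∀ x ∈ Set.Icc (-1 : ℝ) 1, 0 ≤ f.eval x) : 0 < gsI a ha f := by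
  rw [gsI_apply]
  refine intervalIntegral.integral_pos (by norm_num)
    (f.continuous.mul (gs_w_cont ha)).continuousOn ?_ ?_
  · intro x hx
    exact mul_nonneg (h x ⟨hx.1.le, hx.2⟩)
      (Real.rpow_nonneg (by nlinarith [hx.1, hx.2]) _)
  · have hinf : (Set.Ioo (-1 : ℝ) 1).Infinite := Set.Ioo_infinite (by norm_num)
    have hfin : (f.rootSet ℝ).Finite := f.rootSet_finite ℝ
    obtain ⟨c, hc, hc'⟩ := hinf.exists_notMem_finite hfin
    refine ⟨c, ⟨hc.1.le, hc.2.le⟩, mul_pos ?_ (Real.rpow_pos_of_pos (by nlinarith [hc.1, hc.2]) _)⟩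
    refine lt_of_le_of_ne (h c ⟨hc.1.le, hc.2.le⟩) ?_
    intro h0
    exact hc' ((mem_rootSet).2 ⟨hf, by simpa using h0.symm⟩)

lemma gsI_symm (a : ℝ) (ha : 0 ≤ a) (f : ℝ[X]) : gsI a ha (f.comp (-X)) = gsI a ha f := by
  rw [gsI_apply, gsI_apply]
  have := intervalIntegral.integral_comp_neg (a := (-1 : ℝ)) (b := 1)
    (fun x : ℝ => f.eval x * (1 - x ^ 2) ^ a)
  simp only [neg_neg] at this
  rw [← this]
  simp

lemma gsI_Lpos (a : ℝ) (ha : 0 ≤ a) (F : ℝ[X]) (h : ∀ x ∈ Set.Icc (-1 : ℝ) 1, 0 ≤ F.eval x) :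
    (F.eval 1 + F.eval (-1)) * (0 : ℝ) ^ a ≤ gsL a (gsI a ha) F := by
  rw [gsL, gsI_apply]
  set G := C (2 * a + 1) * F + X * derivative F with hG
  let Ψ : ℝ → ℝ := fun x => (∫ t in (-1 : ℝ)..x, G.eval t * (1 - t ^ 2) ^ a)
    - x * F.eval x * (1 - x ^ 2) ^ a
  have hc : Continuous (fun t : ℝ => G.eval t * (1 - t ^ 2) ^ a) :=
    G.continuous.mul (gs_w_cont ha)
  have hmono : MonotoneOn Ψ (Set.Icc (-1) 1) := by
    have hd : ∀ x ∈ Set.Ioo (-1 : ℝ) 1, HasDerivAt Ψ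
        (2 * a * F.eval x * (1 - x ^ 2) ^ (a - 1)) x := by
      intro x hx
      have h0 : (0 : ℝ) < 1 - x ^ 2 := by nlinarith [hx.1, hx.2]
      have h1 : HasDerivAt (fun x : ℝ => 1 - x ^ 2) (-(2 * x)) x := by
        simpa using (hasDerivAt_pow 2 x).const_sub 1
      have h2 := h1.rpow_const (p := a) (Or.inl h0.ne')
      have h3 := ((hasDerivAt_id x).mul (F.hasDerivAt x)).mul h2
      have h4 := (intervalIntegral.integral_hasDerivAt_right
        (hc.intervalIntegrable (-1) x) (hc.stronglyMeasurableAtFilter _ _) hc.continuousAt).sub h3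
      refine h4.congr_deriv ?_
      have h5 : (1 - x ^ 2) ^ a = (1 - x ^ 2) ^ (a - 1) * (1 - x ^ 2) := by
        rw [← Real.rpow_add_one h0.ne']; simp
      simp only [hG, id, eval_add, eval_mul, eval_C, eval_X, Pi.mul_apply]
      rw [h5]
      ring
    refine monotoneOn_of_deriv_nonneg (convex_Icc _ _) ?_ ?_ ?_
    · refine Continuous.continuousOn ?_
      refine Continuous.sub (intervalIntegral.continuous_primitive
        (fun _ _ => hc.intervalIntegrable _ _) _) ?_
      exact (continuous_id.mul F.continuous).mul (gs_w_cont ha)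
    · intro x hx
      rw [interior_Icc] at hx
      exact (hd x hx).differentiableAt.differentiableWithinAt
    · intro x hx
      rw [interior_Icc] at hx
      rw [(hd x hx).deriv]
      have := h x ⟨hx.1.le, hx.2.le⟩
      have h0 : (0 : ℝ) < 1 - x ^ 2 := by nlinarith [hx.1, hx.2]
      have := Real.rpow_pos_of_pos h0 (a - 1)
      positivity
  have := hmono (by norm_num) (by norm_num) (by norm_num : (-1 : ℝ) ≤ 1)
  simp only [Ψ, intervalIntegral.integral_same] at this
  norm_num at this
  linarith

lemma gsI_good (a : ℝ) (ha : 0 ≤ a) : GsGood a (gsI a ha) :=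
  ⟨ha, gsI_ibp a ha, gsI_pos a ha, gsI_symm a ha, gsI_Lpos a ha⟩

end Analytic

section Algebra

variable {a : ℝ} {I : ℝ[X] →ₗ[ℝ] ℝ}

lemma gsL_add (f g : ℝ[X]) : gsL a I (f + g) = gsL a I f + gsL a I g := by
  rw [gsL, gsL, gsL, ← map_add I, derivative_add]; congr 1; ring

lemma gsI_Cmul (c : ℝ) (f : ℝ[X]) : I (C c * f) = c * I f := by
  rw [← smul_eq_C_mul, map_smul, smul_eq_mul]

lemma gsL_Cmul (c : ℝ) (f : ℝ[X]) : gsL a I (C c * f) = c * gsL a I f := by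
  simp only [gsL, ← gsI_Cmul, derivative_C_mul]; congr 1; ring

lemma gsL_neg (f : ℝ[X]) : gsL a I (-f) = - gsL a I f := by
  have := gsL_Cmul (a := a) (I := I) (-1) f
  simpa using this

lemma gsL_sub (f g : ℝ[X]) : gsL a I (f - g) = gsL a I f - gsL a I g := by
  rw [sub_eq_add_neg, gsL_add, gsL_neg]; ring

/-- `gsL` as a linear map -/
noncomputable def gsLl (a : ℝ) (I : ℝ[X] →ₗ[ℝ] ℝ) : ℝ[X] →ₗ[ℝ] ℝ where
  toFun := gsL a I
  map_add' := gsL_add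
  map_smul' c f := by rw [smul_eq_C_mul, gsL_Cmul]; rfl

lemma gsL_sq (H : GsGood a I) (f : ℝ[X]) : gsL a I ((X ^ 2 - 1) * f) = -(2 * a) * I f := by
  have h := H.ibp (X * f)
  have h2 : C (2 * a + 1) * ((X ^ 2 - 1) * f) + X * derivative ((X ^ 2 - 1) * f)
      = C (-(2 * a)) * f
        - ((1 - X ^ 2) * derivative (X * f) - C (2 * (a + 1)) * X * (X * f)) := by
    simp only [derivative_mul, derivative_sub, derivative_X, derivative_X_pow, derivative_one,
      C_mul, C_add, C_neg, map_one, map_ofNat]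
    simp only [Nat.cast_ofNat, map_ofNat]
    ring
  rw [gsL, h2, map_sub, h, gsI_Cmul, sub_zero]

lemma gsI_deriv (H : GsGood a I) (h : ℝ[X]) : I (derivative h) = gsL a I (X * h) := by
  have h1 := H.ibp h
  have h2 : C (2 * a + 1) * (X * h) + X * derivative (X * h)
      = derivative h - ((1 - X ^ 2) * derivative h - C (2 * (a + 1)) * X * h) := by
    simp only [derivative_mul, derivative_X, C_mul, C_add, map_one, map_ofNat]
    ring
  rw [gsL, h2, map_sub, h1, sub_zero]

lemma gsI_one (H : GsGood a I) : 0 < I 1 := H.pos 1 one_ne_zero (by simp)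

lemma gsI_sq_pos (H : GsGood a I) {f : ℝ[X]} (hf : f ≠ 0) : 0 < I (f * f) :=
  H.pos _ (mul_ne_zero hf hf) (fun x _ => by rw [eval_mul]; exact mul_self_nonneg _)

lemma gsI_sq_nonneg (H : GsGood a I) (f : ℝ[X]) : 0 ≤ I (f * f) := by
  by_cases hf : f = 0
  · simp [hf]
  · exact (gsI_sq_pos H hf).le

/-- Sobolev form -/
noncomputable def gsS (lam : ℝ) (I : ℝ[X] →ₗ[ℝ] ℝ) : ℝ[X] →ₗ[ℝ] ℝ[X] →ₗ[ℝ] ℝ :=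
  LinearMap.mk₂ ℝ (fun f g => I (f * g) + lam * I (derivative f * derivative g))
    (by intros; simp only [add_mul, map_add]; ring)
    (by intros; simp only [smul_mul_assoc, map_smul, smul_eq_mul]; ring)
    (by intros; simp only [mul_add, map_add]; ring)
    (by intros; simp only [mul_smul_comm, map_smul, smul_eq_mul]; ring)

lemma gsS_apply (lam : ℝ) (f g : ℝ[X]) :
    gsS lam I f g = I (f * g) + lam * I (derivative f * derivative g) := rfl

/-- auxiliary form -/
noncomputable def gsB (a : ℝ) (I : ℝ[X] →ₗ[ℝ] ℝ) : ℝ[X] →ₗ[ℝ] ℝ[X] →ₗ[ℝ] ℝ :=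
  LinearMap.mk₂ ℝ (fun f g => I (derivative f * derivative g) + gsLl a I f * gsLl a I g)
    (by intros; simp only [add_mul, map_add]; ring)
    (by intros; simp only [smul_mul_assoc, map_smul, smul_eq_mul]; ring)
    (by intros; simp only [mul_add, map_add]; ring)
    (by intros; simp only [mul_smul_comm, map_smul, smul_eq_mul]; ring)

lemma gsB_apply (f g : ℝ[X]) :
    gsB a I f g = I (derivative f * derivative g) + gsL a I f * gsL a I g := rfl

lemma gsS_pos (H : GsGood a I) {lam : ℝ} (hl : 0 ≤ lam) (f : ℝ[X]) (hf : f ≠ 0) :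
    0 < gsS lam I f f := by
  rw [gsS_apply]
  have := gsI_sq_pos H hf
  have := mul_nonneg hl (gsI_sq_nonneg H (derivative f))
  linarith

lemma gsL_one (H : GsGood a I) : 0 < gsL a I 1 := by
  have h : gsL a I 1 = (2 * a + 1) * I 1 := by
    rw [← gsI_Cmul, gsL]; simp
  rw [h]
  have := gsI_one H
  have := H.ha
  positivity

lemma gsB_pos (H : GsGood a I) (f : ℝ[X]) (hf : f ≠ 0) : 0 < gsB a I f f := by
  rw [gsB_apply]
  by_cases hd : derivative f = 0
  · have hc := derivative_eq_zero.1 hd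
    rw [natDegree_eq_zero] at hc
    obtain ⟨c, rfl⟩ := hc
    have hc0 : c ≠ 0 := by rintro rfl; simp at hf
    have : gsL a I (C c) = c * gsL a I 1 := by rw [← gsL_Cmul, mul_one]
    rw [this]
    have := gsL_one H
    have h3 : c * gsL a I 1 ≠ 0 := by positivity
    have := mul_self_pos.2 h3
    simp only [derivative_C, mul_zero, map_zero, zero_add]
    exact this
  · have := gsI_sq_pos H hd
    have := mul_self_nonneg (gsL a I f)
    linarith

/-- Existence of monic orthogonal polynomials. -/
lemma gs_exists (B : ℝ[X] →ₗ[ℝ] ℝ[X] →ₗ[ℝ] ℝ) (hB : ∀ f, f ≠ 0 → 0 < B f f) (n : ℕ) :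
    ∃ Q : ℝ[X], Q.Monic ∧ Q.natDegree = n ∧ ∀ p : ℝ[X], p.degree < (n : ℕ) → B Q p = 0 := by
  let V := degreeLT ℝ n
  have : FiniteDimensional ℝ V := Module.Finite.equiv (degreeLTEquiv ℝ n).symm
  let φ : V →ₗ[ℝ] Module.Dual ℝ V := B.domRestrict₁₂ V V
  have hφ : ∀ u v : V, φ u v = B u v := fun _ _ => rfl
  have hinj : Function.Injective φ := by
    rw [← LinearMap.ker_eq_bot, LinearMap.ker_eq_bot']
    intro u hu
    by_contra h
    have := hB u (by simpa using h)
    rw [← hφ, hu] at this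
    simp at this
  have hsurj : Function.Surjective φ :=
    (LinearMap.injective_iff_surjective_of_finrank_eq_finrank
      (Subspace.dual_finrank_eq).symm).1 hinj
  obtain ⟨r, hr⟩ := hsurj ((B (X ^ n)).domRestrict V)
  have hrd : (r : ℝ[X]).degree < (n : ℕ) := mem_degreeLT.1 r.2
  refine ⟨X ^ n - (r : ℝ[X]), monic_X_pow_sub (n := n) (p := (r : ℝ[X])) ?_, ?_, ?_⟩
  · exact hrd
  · refine natDegree_eq_of_degree_eq_some ?_
    rw [degree_sub_eq_left_of_degree_lt (by simpa using hrd)]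
    simp
  · intro p hp
    have := LinearMap.congr_fun hr ⟨p, mem_degreeLT.2 hp⟩
    rw [hφ] at this
    simp only [LinearMap.domRestrict_apply] at this
    rw [map_sub, LinearMap.sub_apply, this, sub_self]

lemma gs_unique (B : ℝ[X] →ₗ[ℝ] ℝ[X] →ₗ[ℝ] ℝ) (hB : ∀ f, f ≠ 0 → 0 < B f f) (n : ℕ)
    {P Q : ℝ[X]} (hP : P.Monic) (hPn : P.natDegree = n)
    (hPo : ∀ p : ℝ[X], p.degree < (n : ℕ) → B P p = 0)
    (hQ : Q.Monic) (hQn : Q.natDegree = n)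
    (hQo : ∀ p : ℝ[X], p.degree < (n : ℕ) → B Q p = 0) : P = Q := by
  by_contra hne
  have hd : (P - Q).degree < (n : ℕ) := by
    have := degree_sub_lt_left (p := P) (q := Q)
      (by rw [degree_eq_natDegree hP.ne_zero, degree_eq_natDegree hQ.ne_zero, hPn, hQn])
      hP.ne_zero (by rw [hP.leadingCoeff, hQ.leadingCoeff])
    rwa [degree_eq_natDegree hP.ne_zero, hPn] at this
  have h := hB (P - Q) (sub_ne_zero.2 hne)
  rw [B.map_sub P Q, LinearMap.sub_apply, hPo _ hd, hQo _ hd] at h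
  simp at h

lemma gs_vanish (φ : ℝ[X] →ₗ[ℝ] ℝ) (n : ℕ) (h : ∀ j < n, φ (X ^ j) = 0) (p : ℝ[X])
    (hp : p.degree < (n : ℕ)) : φ p = 0 := by
  by_cases h0 : p = 0
  · simp [h0]
  rw [as_sum_range' p n, map_sum]
  · refine Finset.sum_eq_zero fun j hj => ?_
    rw [← C_mul_X_pow_eq_monomial, gsI_Cmul, h j (Finset.mem_range.1 hj), mul_zero]
  · exact (natDegree_lt_iff_degree_lt h0).2 hp

/-- the abstract Sobolev polynomial -/
def GsSob (lam : ℝ) (I : ℝ[X] →ₗ[ℝ] ℝ) (n : ℕ) (Q : ℝ[X]) : Prop :=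
  Q.Monic ∧ Q.natDegree = n ∧ ∀ p : ℝ[X], p.degree < (n : ℕ) → gsS lam I Q p = 0

lemma gs_deriv_comp (f : ℝ[X]) : derivative (f.comp (-X)) = - (derivative f).comp (-X) := by
  rw [derivative_comp]; simp

lemma gs_comp_comp (f : ℝ[X]) : (f.comp (-X)).comp (-X) = f := by
  rw [comp_assoc]; simp

lemma gsS_symm (H : GsGood a I) (lam : ℝ) (f g : ℝ[X]) :
    gsS lam I (f.comp (-X)) g = gsS lam I f (g.comp (-X)) := by
  rw [gsS_apply, gsS_apply, ← H.symm, ← H.symm (derivative _ * derivative _)]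
  simp only [mul_comp, gs_comp_comp, gs_deriv_comp, neg_comp]
  simp

lemma gs_parity (H : GsGood a I) {lam : ℝ} (hl : 0 ≤ lam) {n : ℕ} {Q : ℝ[X]}
    (hQ : GsSob lam I n Q) : Q.comp (-X) = C ((-1) ^ n) * Q := by
  obtain ⟨h1, h2, h3⟩ := hQ
  have hdeg : ∀ p : ℝ[X], (p.comp (-X)).natDegree = p.natDegree := by
    intro p; rw [natDegree_comp]; simp
  have hlc : (Q.comp (-X)).leadingCoeff = (-1) ^ n := by
    rw [leadingCoeff_comp (by simp), h1.leadingCoeff, h2]; simp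
  have hne : ((-1 : ℝ) ^ n) ≠ 0 := by positivity
  have hsq : ((-1 : ℝ) ^ n) * (-1) ^ n = 1 := by rw [← mul_pow]; simp
  have key : C ((-1 : ℝ) ^ n) * Q.comp (-X) = Q := by
    refine gs_unique (gsS lam I) (gsS_pos H hl) n ?_ ?_ ?_ h1 h2 h3
    · rw [Monic, leadingCoeff_mul, leadingCoeff_C, hlc, hsq]
    · rw [natDegree_C_mul hne, hdeg, h2]
    · intro p hp
      rw [← smul_eq_C_mul, map_smul, LinearMap.smul_apply, gsS_symm H, h3, smul_zero]
      by_cases h0 : p = 0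
      · simp [h0]
      · have h0' : p.comp (-X) ≠ 0 := by
          intro h; apply h0; rw [← gs_comp_comp p, h]; simp
        rw [degree_eq_natDegree h0', hdeg, ← degree_eq_natDegree h0]; exact hp
  conv_rhs => rw [← key]
  rw [← mul_assoc, ← C_mul, hsq, C_1, one_mul]

lemma gsI_odd (H : GsGood a I) {f : ℝ[X]} (hf : f.comp (-X) = -f) : I f = 0 := by
  have := H.symm f
  rw [hf, map_neg] at this
  linarith

lemma gsL_odd (H : GsGood a I) {f : ℝ[X]} (hf : f.comp (-X) = -f) : gsL a I f = 0 := by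
  refine gsI_odd H ?_
  have hd : (derivative f).comp (-X) = derivative f := by
    have := gs_deriv_comp f
    rw [hf, derivative_neg] at this
    exact (neg_injective this).symm
  simp only [add_comp, mul_comp, C_comp, X_comp, hf, hd]
  ring

lemma gs_R (H : GsGood a I) (k : ℕ) : ∃ R : ℝ[X], R.Monic ∧ R.natDegree = k + 2 ∧
    (∀ p : ℝ[X], p.degree < ((k + 2 : ℕ) : WithBot ℕ) →
      I (derivative R * derivative p) = 0) ∧
    (∀ p : ℝ[X], p.degree < (k : ℕ) → I (R * p) = 0) ∧
    (∀ p : ℝ[X], p.degree < ((k + 1 : ℕ) : WithBot ℕ) → gsL a I (R * p) = 0) ∧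
    I (R * X ^ k) ≤ 0 := by
  obtain ⟨R, h1, h2, h3⟩ := gs_exists (gsB a I) (gsB_pos H) (k + 2)
  have hLR : gsL a I R = 0 := by
    have := h3 1 (by rw [degree_one]; exact_mod_cast Nat.succ_pos _)
    rw [gsB_apply] at this
    simp only [derivative_one, mul_zero, map_zero, zero_add] at this
    exact (mul_eq_zero.1 this).resolve_right (gsL_one H).ne'
  have r1 : ∀ p : ℝ[X], p.degree < ((k + 2 : ℕ) : WithBot ℕ) →
      I (derivative R * derivative p) = 0 := by
    intro p hp
    have := h3 p hp
    rw [gsB_apply, hLR] at this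
    simpa using this
  have hd : ∀ j : ℕ, I (derivative R * derivative (X ^ (j + 1)))
      = (j + 1) * I (derivative R * X ^ j) := by
    intro j
    rw [← gsI_Cmul]
    congr 1
    rw [derivative_X_pow]
    push_cast
    simp only [C_add, C_1]
    ring
  have m1 : ∀ j < k + 1, I (derivative R * X ^ j) = 0 := by
    intro j hj
    have := r1 (X ^ (j + 1)) (by rw [degree_X_pow]; exact_mod_cast (by omega))
    rw [hd] at this
    exact (mul_eq_zero.1 this).resolve_left (by positivity)
  have m1' : 0 < I (derivative R * X ^ (k + 1)) := by
    have hpos := gsB_pos H R h1.ne_zero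
    have hlow : (R - X ^ (k + 2)).degree < ((k + 2 : ℕ) : WithBot ℕ) := by
      have := degree_sub_lt_left (p := R) (q := X ^ (k + 2))
        (by rw [degree_eq_natDegree h1.ne_zero, degree_X_pow, h2])
        h1.ne_zero (by rw [h1.leadingCoeff, (monic_X_pow _).leadingCoeff])
      rwa [degree_eq_natDegree h1.ne_zero, h2] at this
    have e := h3 _ hlow
    rw [map_sub] at e
    have e2 : gsB a I R (X ^ (k + 2)) = ((k + 1 : ℕ) + 1) * I (derivative R * X ^ (k + 1)) := by
      rw [gsB_apply, hLR, zero_mul, add_zero, ← hd]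
    rw [sub_eq_zero.1 e, e2] at hpos
    exact (mul_pos_iff_of_pos_left (by positivity)).1 hpos
  have rel : ∀ j : ℕ, (2 * a + 1 + j) * I (R * X ^ j)
      = gsL a I (R * X ^ j) - I (derivative R * X ^ (j + 1)) := by
    intro j
    rw [gsL, ← map_sub, ← gsI_Cmul]
    congr 1
    rcases j with _ | j
    · simp only [pow_zero, mul_one, C_add, C_mul, Nat.cast_zero, C_0]; ring
    · simp only [derivative_mul, derivative_X_pow, C_add, C_mul, C_1, add_tsub_cancel_right]
      ring
  have Lrel : ∀ j : ℕ, gsL a I (R * X ^ (j + 1)) = I (derivative R * X ^ j) + j * I (R * X ^ (j - 1)) := by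
    intro j
    rw [← gsI_Cmul, ← map_add]
    have : R * X ^ (j + 1) = X * (R * X ^ j) := by ring
    rw [this, ← gsI_deriv H]
    congr 1
    simp only [derivative_mul, derivative_X_pow]
    ring
  have ha := H.ha
  have main : ∀ j : ℕ, (j < k → I (R * X ^ j) = 0) ∧ (j < k + 1 → gsL a I (R * X ^ j) = 0) := by
    intro j
    induction j using Nat.strong_induction_on with
    | _ j ih =>
      have hL : j < k + 1 → gsL a I (R * X ^ j) = 0 := by
        intro hj
        rcases j with _ | j
        · simpa using hLR
        · rw [Lrel, m1 j (by omega)]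
          rcases j with _ | j
          · simp
          · rw [Nat.add_sub_cancel, (ih j (by omega)).1 (by omega)]; simp
      refine ⟨fun hj => ?_, hL⟩
      have := rel j
      rw [hL (by omega), m1 (j + 1) (by omega), sub_zero] at this
      exact (mul_eq_zero.1 this).resolve_left (by positivity)
  refine ⟨R, h1, h2, r1, ?_, ?_, ?_⟩
  · intro p hp
    exact gs_vanish (I ∘ₗ LinearMap.mulLeft ℝ R) k (fun j hj => (main j).1 hj) p hp
  · intro p hp
    exact gs_vanish (gsLl a I ∘ₗ LinearMap.mulLeft ℝ R) (k + 1) (fun j hj => (main j).2 hj) p hp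
  · have := rel k
    rw [(main k).2 (by omega), zero_sub] at this
    by_contra hcon
    push Not at hcon
    have h5 : 0 < (2 * a + 1 + k) * I (R * X ^ k) := by positivity
    linarith

lemma gs_monic_sub_lt {P Q : ℝ[X]} {n : ℕ} (hP : P.Monic) (hPn : P.natDegree = n)
    (hQ : Q.Monic) (hQn : Q.natDegree = n) : (P - Q).degree < (n : ℕ) := by
  have := degree_sub_lt_left (p := P) (q := Q)
      (by rw [degree_eq_natDegree hP.ne_zero, degree_eq_natDegree hQ.ne_zero, hPn, hQn])
      hP.ne_zero (by rw [hP.leadingCoeff, hQ.leadingCoeff])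
  rwa [degree_eq_natDegree hP.ne_zero, hPn] at this

lemma gs_reduce {D Q : ℝ[X]} {n : ℕ} (hD : D.degree < ((n + 1 : ℕ) : WithBot ℕ))
    (hQ : Q.Monic) (hQn : Q.natDegree = n) : (D - C (D.coeff n) * Q).degree < (n : ℕ) := by
  rw [degree_lt_iff_coeff_zero] at hD ⊢
  intro j hj
  rcases hj.eq_or_lt with rfl | hj
  · have : Q.coeff n = 1 := by rw [← hQn]; exact hQ
    simp [this]
  · rw [coeff_sub, hD j (by omega), coeff_C_mul,
      coeff_eq_zero_of_natDegree_lt (p := Q) (by omega)]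
    simp

lemma gs_decomp (H : GsGood a I) {lam : ℝ} (hl : 0 ≤ lam) {k : ℕ} {Q : ℝ[X]}
    (hQ : GsSob lam I (k + 2) Q) :
    ∃ (R Q0 Q1 : ℝ[X]) (c c' : ℝ), GsSob lam I k Q0 ∧ GsSob lam I (k + 1) Q1 ∧ 0 ≤ c ∧
      Q = R + C c * Q0 + C c' * Q1 ∧
      (∀ p : ℝ[X], p.degree < (k : ℕ) → I (R * p) = 0) ∧
      (∀ p : ℝ[X], p.degree < ((k + 1 : ℕ) : WithBot ℕ) → gsL a I (R * p) = 0) := by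
  obtain ⟨R, h1, h2, r1, r2, r3, r4⟩ := gs_R H k
  obtain ⟨Q0, hQ0⟩ := gs_exists (gsS lam I) (gsS_pos H hl) k
  obtain ⟨Q1, hQ1⟩ := gs_exists (gsS lam I) (gsS_pos H hl) (k + 1)
  obtain ⟨q1, q2, q3⟩ := hQ
  have hk1 : ((k : ℕ) : WithBot ℕ) < ((k + 1 : ℕ) : WithBot ℕ) := by exact_mod_cast Nat.lt_succ_self k
  have hk2 : ((k + 1 : ℕ) : WithBot ℕ) < ((k + 2 : ℕ) : WithBot ℕ) := by
    exact_mod_cast Nat.lt_succ_self (k + 1)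
  have hD : (Q - R).degree < ((k + 2 : ℕ) : WithBot ℕ) := gs_monic_sub_lt q1 q2 h1 h2
  set D := Q - R with hDdef
  set c' := D.coeff (k + 1)
  have hD1 := gs_reduce hD hQ1.1 hQ1.2.1
  set D1 := D - C c' * Q1 with hD1def
  set c := D1.coeff k
  have hD2 := gs_reduce hD1 hQ0.1 hQ0.2.1
  set D2 := D1 - C c * Q0 with hD2def
  have hdec : Q = R + C c * Q0 + C c' * Q1 + D2 := by
    rw [hD2def, hD1def, hDdef]; ring
  have SR : ∀ p : ℝ[X], p.degree < (k : ℕ) → gsS lam I R p = 0 := by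
    intro p hp
    rw [gsS_apply, r2 p hp, r1 p (hp.trans (hk1.trans hk2))]; simp
  have expand : ∀ p, gsS lam I Q p = gsS lam I R p + c * gsS lam I Q0 p + c' * gsS lam I Q1 p
      + gsS lam I D2 p := by
    intro p
    conv_lhs => rw [hdec]
    simp only [← smul_eq_C_mul, map_add, map_smul, LinearMap.add_apply, LinearMap.smul_apply,
      smul_eq_mul]
  have hz : D2 = 0 := by
    by_contra hne
    have hpos := gsS_pos H hl D2 hne
    have := expand D2
    rw [q3 _ (hD2.trans (hk1.trans hk2)), SR _ hD2, hQ0.2.2 _ hD2, hQ1.2.2 _ (hD2.trans hk1)] at this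
    simp at this
    linarith
  have hQ0d : Q0.degree = (k : ℕ) := by rw [degree_eq_natDegree hQ0.1.ne_zero, hQ0.2.1]
  have hc : 0 ≤ c := by
    have := expand Q0
    rw [q3 _ (by rw [hQ0d]; exact hk1.trans hk2), hQ1.2.2 _ (by rw [hQ0d]; exact hk1), hz] at this
    simp only [map_zero, LinearMap.zero_apply, mul_zero, add_zero] at this
    have hpos := gsS_pos H hl Q0 hQ0.1.ne_zero
    have hR : gsS lam I R Q0 ≤ 0 := by
      rw [gsS_apply, r1 Q0 (by rw [hQ0d]; exact hk1.trans hk2), mul_zero, add_zero]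
      have e := r2 (Q0 - X ^ k) (gs_monic_sub_lt hQ0.1 hQ0.2.1 (monic_X_pow k) (natDegree_X_pow k))
      rw [mul_sub, map_sub, sub_eq_zero] at e
      rw [e]; exact r4
    by_contra hcon
    push Not at hcon
    nlinarith [mul_neg_of_neg_of_pos hcon hpos]
  refine ⟨R, Q0, Q1, c, c', hQ0, hQ1, hc, ?_, r2, r3⟩
  rw [hz, add_zero] at hdec
  exact hdec

lemma gs_LI (H : GsGood a I) {Q : ℝ[X]} {e m : ℕ}
    (hA : ∀ i j, i + j < m → I (Q * X ^ (2 * j + e) * (X ^ 2 - 1) ^ i) ≤ 0)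
    (hB : ∀ j ≤ m, 0 ≤ gsL a I (Q * X ^ (2 * j + e))) :
    ∀ i j, i + j ≤ m → 0 ≤ gsL a I (Q * X ^ (2 * j + e) * (X ^ 2 - 1) ^ i) := by
  intro i j hij
  rcases i with _ | i
  · simpa using hB j (by omega)
  · have : Q * X ^ (2 * j + e) * (X ^ 2 - 1) ^ (i + 1)
        = (X ^ 2 - 1) * (Q * X ^ (2 * j + e) * (X ^ 2 - 1) ^ i) := by ring
    rw [this, gsL_sq H]
    have h1 := hA i j (by omega)
    have h2 := H.ha
    nlinarith [mul_nonneg h2 (neg_nonneg.2 h1)]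

lemma gs_deg (e i j : ℕ) :
    ((X : ℝ[X]) ^ (2 * j + e) * (X ^ 2 - 1) ^ i).degree = ((2 * (i + j) + e : ℕ) : WithBot ℕ) := by
  have hm : ((X : ℝ[X]) ^ 2 - 1).Monic := by
    simpa using monic_X_pow_sub_C (1 : ℝ) (n := 2) (by norm_num)
  have hn : ((X : ℝ[X]) ^ 2 - 1).natDegree = 2 := by
    simpa using natDegree_X_pow_sub_C (n := 2) (r := (1 : ℝ))
  rw [degree_eq_natDegree ((monic_X_pow _).mul (hm.pow i)).ne_zero,
    (monic_X_pow _).natDegree_mul (hm.pow i), hm.natDegree_pow, hn, natDegree_X_pow]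
  congr 1
  ring

lemma gs_neg_pow (n : ℕ) : ((-X : ℝ[X])) ^ n = C ((-1) ^ n) * X ^ n := by
  rw [neg_pow]; simp

lemma gs_parts (H : GsGood a I) (Q p : ℝ[X]) :
    I (derivative Q * derivative p) = gsL a I (X * (Q * derivative p))
          - I (Q * derivative (derivative p)) := by
  rw [← gsI_deriv H, derivative_mul, map_add]; ring

lemma gs_d1 (q i : ℕ) : X * derivative ((X : ℝ[X]) ^ q * (X ^ 2 - 1) ^ i)
    = C (q : ℝ) * (X ^ q * (X ^ 2 - 1) ^ i)
      + C (2 * i : ℝ) * (X ^ (q + 2) * (X ^ 2 - 1) ^ (i - 1)) := by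
  rcases q with _ | q <;> rcases i with _ | i <;>
  simp [derivative_mul, derivative_pow] <;> ring

lemma gs_d2 (q i : ℕ) : derivative (derivative ((X : ℝ[X]) ^ q * (X ^ 2 - 1) ^ i))
    = C ((q : ℝ) * (q - 1)) * (X ^ (q - 2) * (X ^ 2 - 1) ^ i)
      + C ((4 * q + 2) * i : ℝ) * (X ^ q * (X ^ 2 - 1) ^ (i - 1))
      + C (4 * i * (i - 1) : ℝ) * (X ^ (q + 2) * (X ^ 2 - 1) ^ (i - 2)) := by
  have h2 : C (2 : ℝ) = 2 := map_ofNat C 2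
  have h4 : C (4 : ℝ) = 4 := map_ofNat C 4
  rcases q with _ | _ | q <;> rcases i with _ | _ | i <;>
  simp [derivative_mul, derivative_pow, h2, h4] <;> ring

lemma gs_cone (H : GsGood a I) {lam : ℝ} (hl : 0 ≤ lam) (e : ℕ) (he : e = 0 ∨ e = 1) (m : ℕ) :
    ∀ Q : ℝ[X], GsSob lam I (2 * m + e) Q →
      (∀ i j, i + j < m → I (Q * X ^ (2 * j + e) * (X ^ 2 - 1) ^ i) ≤ 0) ∧
      (∀ j ≤ m, 0 ≤ gsL a I (Q * X ^ (2 * j + e))) := by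
  induction m with
  | zero =>
    intro Q hQ
    refine ⟨fun i j h => absurd h (Nat.not_lt_zero _), ?_⟩
    intro j hj
    obtain rfl : j = 0 := by omega
    obtain ⟨q1, q2, -⟩ := hQ
    rcases he with rfl | rfl
    · have : Q = 1 := q1.natDegree_eq_zero.1 (by simpa using q2)
      simpa [this] using (gsL_one H).le
    · have : Q * X ^ (2 * 0 + 1) = X * Q := by ring
      rw [this, ← gsI_deriv H]
      have hd : derivative Q = 1 := by
        rw [q1.eq_X_add_C (by simpa using q2)]; simp
      rw [hd]; exact (gsI_one H).le
  | succ m ih =>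
    intro Q hQ
    have hQ' : GsSob lam I (2 * m + e + 2) Q := by
      convert hQ using 1; ring
    obtain ⟨R, Q0, Q1, c, c', hQ0, hQ1, hc, hdec, r2, r3⟩ := gs_decomp H hl hQ'
    obtain ⟨ihA, ihB⟩ := ih Q0 hQ0
    have ihL := gs_LI H ihA ihB
    have hpar : ∀ i j, (Q1 * (X ^ (2 * j + e) * (X ^ 2 - 1) ^ i)).comp (-X)
        = - (Q1 * (X ^ (2 * j + e) * (X ^ 2 - 1) ^ i)) := by
      intro i j
      simp only [mul_comp, pow_comp, sub_comp, X_comp, one_comp, gs_parity H hl hQ1, gs_neg_pow]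
      have : (-1 : ℝ) ^ (2 * m + e + 1) * (-1) ^ (2 * j + e) = -1 := by
        rcases he with rfl | rfl <;> simp [pow_add, pow_mul]
      have h2 : C ((-1 : ℝ) ^ (2 * m + e + 1)) * C ((-1 : ℝ) ^ (2 * j + e)) = -1 := by
        rw [← C_mul, this]; simp
      have h3 : C ((-1 : ℝ) ^ 2) = 1 := by simp
      rw [h3]
      linear_combination (Q1 * X ^ (2 * j + e) * (X ^ 2 - 1) ^ i) * h2
    have A1 : ∀ i j, i + j < m → I (Q * X ^ (2 * j + e) * (X ^ 2 - 1) ^ i) ≤ 0 := by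
      intro i j hij
      have h1 : Q * X ^ (2 * j + e) * (X ^ 2 - 1) ^ i = R * (X ^ (2 * j + e) * (X ^ 2 - 1) ^ i)
          + C c * (Q0 * X ^ (2 * j + e) * (X ^ 2 - 1) ^ i)
          + C c' * (Q1 * (X ^ (2 * j + e) * (X ^ 2 - 1) ^ i)) := by
        conv_lhs => rw [hdec]
        ring
      rw [h1, map_add, map_add, gsI_Cmul, gsI_Cmul, gsI_odd H (hpar i j),
        r2 _ (by rw [gs_deg]; exact_mod_cast (by omega))]
      have := mul_nonneg hc (neg_nonneg.2 (ihA i j hij))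
      linarith
    have B1 : ∀ j ≤ m, 0 ≤ gsL a I (Q * X ^ (2 * j + e)) := by
      intro j hj
      have h1 : Q * X ^ (2 * j + e) = R * (X ^ (2 * j + e) * (X ^ 2 - 1) ^ 0)
          + C c * (Q0 * X ^ (2 * j + e))
          + C c' * (Q1 * (X ^ (2 * j + e) * (X ^ 2 - 1) ^ 0)) := by
        conv_lhs => rw [hdec]
        ring
      rw [h1, gsL_add, gsL_add, gsL_Cmul, gsL_Cmul, gsL_odd H (hpar 0 j),
        r3 _ (by rw [gs_deg]; exact_mod_cast (by omega))]
      have := mul_nonneg hc (ihB j hj)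
      linarith
    have L1 := gs_LI H A1 B1
    have A2 : ∀ i j, i + j = m → I (Q * X ^ (2 * j + e) * (X ^ 2 - 1) ^ i) ≤ 0 := by
      intro i j hij
      set p : ℝ[X] := X ^ (2 * j + e) * (X ^ 2 - 1) ^ i with hp
      have hS := hQ'.2.2 p (by rw [hp, gs_deg]; exact_mod_cast (by omega))
      rw [gsS_apply] at hS
      have hI : I (derivative Q * derivative p) = gsL a I (X * (Q * derivative p))
          - I (Q * derivative (derivative p)) := by
        exact gs_parts H Q p
      have hd1 : X * derivative p = C ((2 * j + e : ℕ) : ℝ) * (X ^ (2 * j + e) * (X ^ 2 - 1) ^ i)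
          + C (2 * i : ℝ) * (X ^ (2 * (j + 1) + e) * (X ^ 2 - 1) ^ (i - 1)) := by
        rw [hp, gs_d1]
        congr 3
        ring
      have hd2 : derivative (derivative p) =
          C (((2 * j + e : ℕ) : ℝ) * ((2 * j + e : ℕ) - 1)) *
            (X ^ (2 * (j - 1) + e) * (X ^ 2 - 1) ^ i)
          + C ((4 * (2 * j + e : ℕ) + 2) * i : ℝ) * (X ^ (2 * j + e) * (X ^ 2 - 1) ^ (i - 1))
          + C (4 * i * (i - 1) : ℝ) * (X ^ (2 * (j + 1) + e) * (X ^ 2 - 1) ^ (i - 2)) := by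
        rw [hp, gs_d2]
        congr 2
        · rcases j with _ | j
          · rcases he with rfl | rfl <;> simp
          · congr 3
            omega
        · congr 2
          ring
      have hL : 0 ≤ gsL a I (X * (Q * derivative p)) := by
        have : X * (Q * derivative p) =
            C ((2 * j + e : ℕ) : ℝ) * (Q * X ^ (2 * j + e) * (X ^ 2 - 1) ^ i)
            + C (2 * i : ℝ) * (Q * X ^ (2 * (j + 1) + e) * (X ^ 2 - 1) ^ (i - 1)) := by
          linear_combination Q * hd1
        rw [this, gsL_add, gsL_Cmul, gsL_Cmul]
        refine add_nonneg (mul_nonneg (by positivity) (L1 i j (by omega))) ?_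
        rcases i with _ | i
        · simp
        · exact mul_nonneg (by positivity) (L1 _ _ (by omega))
      have hI2 : I (Q * derivative (derivative p)) ≤ 0 := by
        have : Q * derivative (derivative p) =
            C (((2 * j + e : ℕ) : ℝ) * ((2 * j + e : ℕ) - 1)) *
              (Q * X ^ (2 * (j - 1) + e) * (X ^ 2 - 1) ^ i)
            + C ((4 * (2 * j + e : ℕ) + 2) * i : ℝ) *
              (Q * X ^ (2 * j + e) * (X ^ 2 - 1) ^ (i - 1))
            + C (4 * i * (i - 1) : ℝ) *
              (Q * X ^ (2 * (j + 1) + e) * (X ^ 2 - 1) ^ (i - 2)) := by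
          rw [hd2]; ring
        rw [this, map_add, map_add, gsI_Cmul, gsI_Cmul, gsI_Cmul]
        have t1 : ((2 * j + e : ℕ) : ℝ) * ((2 * j + e : ℕ) - 1) *
            I (Q * X ^ (2 * (j - 1) + e) * (X ^ 2 - 1) ^ i) ≤ 0 := by
          rcases j with _ | j
          · rcases he with rfl | rfl <;> simp
          · refine mul_nonpos_of_nonneg_of_nonpos (mul_nonneg (by positivity) ?_)
              (A1 _ _ (by omega))
            push_cast
            have : (0 : ℝ) ≤ j := by positivity
            have : (0 : ℝ) ≤ e := by positivity
            linarith
        have t2 : ((4 * (2 * j + e : ℕ) + 2) * i : ℝ) *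
              I (Q * X ^ (2 * j + e) * (X ^ 2 - 1) ^ (i - 1)) ≤ 0 := by
          rcases i with _ | i
          · simp
          · exact mul_nonpos_of_nonneg_of_nonpos (by positivity) (A1 _ _ (by omega))
        have t3 : (4 * i * (i - 1) : ℝ) *
              I (Q * X ^ (2 * (j + 1) + e) * (X ^ 2 - 1) ^ (i - 2)) ≤ 0 := by
          rcases i with _ | _ | i
          · simp
          · simp
          · refine mul_nonpos_of_nonneg_of_nonpos (mul_nonneg (by positivity) ?_)
              (A1 _ _ (by omega))
            push_cast
            have : (0 : ℝ) ≤ i := by positivity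
            linarith
        linarith
      rw [hI] at hS
      have h9 : Q * X ^ (2 * j + e) * (X ^ 2 - 1) ^ i = Q * p := by rw [hp]; ring
      rw [h9]
      have := mul_nonneg hl (sub_nonneg.2 (hI2.trans hL))
      linarith
    refine ⟨?_, ?_⟩
    · intro i j hij
      rcases (by omega : i + j < m ∨ i + j = m) with h | h
      · exact A1 i j h
      · exact A2 i j h
    · intro j hj
      rcases (by omega : j ≤ m ∨ j = m + 1) with h | rfl
      · exact B1 j h
      · have : Q * X ^ (2 * (m + 1) + e) = Q * X ^ (2 * m + e)
            + (X ^ 2 - 1) * (Q * X ^ (2 * m + e) * (X ^ 2 - 1) ^ 0) := by ring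
        rw [this, gsL_add, gsL_sq H]
        have h1 := B1 m le_rfl
        have h2 := A2 0 m (by omega)
        nlinarith [mul_nonneg H.ha (neg_nonneg.2 h2)]

lemma gs_multi {Q : ℝ[X]} {e m : ℕ}
    (hA : ∀ i j, i + j < m → I (Q * X ^ (2 * j + e) * (X ^ 2 - 1) ^ i) ≤ 0)
    (hL : ∀ i j, i + j ≤ m → 0 ≤ gsL a I (Q * X ^ (2 * j + e) * (X ^ 2 - 1) ^ i))
    (s : Multiset ℝ) (hs : ∀ t ∈ s, 0 < t ∧ t < 1) : ∀ i j,
    (i + j + Multiset.card s < m → I (Q * X ^ (2 * j + e) * (X ^ 2 - 1) ^ i *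
      (s.map (fun t => X ^ 2 - C t)).prod) ≤ 0) ∧
    (i + j + Multiset.card s ≤ m → 0 ≤ gsL a I (Q * X ^ (2 * j + e) * (X ^ 2 - 1) ^ i *
      (s.map (fun t => X ^ 2 - C t)).prod)) := by
  induction s using Multiset.induction_on with
  | empty => intro i j; simpa using ⟨hA i j, hL i j⟩
  | cons t s ih =>
    have ih' := ih (fun u hu => hs u (Multiset.mem_cons_of_mem hu))
    obtain ⟨t0, t1⟩ := hs t (Multiset.mem_cons_self t s)
    intro i j
    rw [Multiset.card_cons, Multiset.map_cons, Multiset.prod_cons]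
    set P := (s.map (fun t => X ^ 2 - C t)).prod
    have key : Q * X ^ (2 * j + e) * (X ^ 2 - 1) ^ i * ((X ^ 2 - C t) * P)
        = C t * (Q * X ^ (2 * j + e) * (X ^ 2 - 1) ^ (i + 1) * P)
          + C (1 - t) * (Q * X ^ (2 * (j + 1) + e) * (X ^ 2 - 1) ^ i * P) := by
      rw [C_sub, C_1]; ring
    rw [key, map_add, gsL_add, gsI_Cmul, gsI_Cmul, gsL_Cmul, gsL_Cmul]
    constructor
    · intro h
      have h1 := (ih' (i + 1) j).1 (by omega)
      have h2 := (ih' i (j + 1)).1 (by omega)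
      nlinarith [mul_nonneg t0.le (neg_nonneg.2 h1), mul_nonneg (sub_nonneg.2 t1.le) (neg_nonneg.2 h2)]
    · intro h
      have h1 := (ih' (i + 1) j).2 (by omega)
      have h2 := (ih' i (j + 1)).2 (by omega)
      exact add_nonneg (mul_nonneg t0.le h1) (mul_nonneg (sub_nonneg.2 t1.le) h2)

lemma gs_factor (n : ℕ) : ∀ q : ℝ[X], q.natDegree = n → q ≠ 0 →
    ∃ (s : Multiset ℝ) (r : ℝ[X]), q = (s.map (fun t => X - C t)).prod * r ∧
      (∀ t ∈ s, 0 < t ∧ t < 1) ∧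
      ((∀ x ∈ Set.Icc (0 : ℝ) 1, 0 ≤ r.eval x) ∨ (∀ x ∈ Set.Icc (0 : ℝ) 1, r.eval x ≤ 0)) := by
  induction n with
  | zero =>
    intro q hq _
    rw [natDegree_eq_zero] at hq
    obtain ⟨c, rfl⟩ := hq
    refine ⟨0, C c, by simp, by simp, ?_⟩
    rcases le_total 0 c with h | h
    · left; intro x _; simpa using h
    · right; intro x _; simpa using h
  | succ n ih =>
    intro q hq hq0
    by_cases hsgn : (∀ x ∈ Set.Icc (0 : ℝ) 1, 0 ≤ q.eval x) ∨
        (∀ x ∈ Set.Icc (0 : ℝ) 1, q.eval x ≤ 0)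
    · exact ⟨0, q, by simp, by simp, hsgn⟩
    · push Not at hsgn
      obtain ⟨⟨x, hx, hxq⟩, ⟨y, hy, hyq⟩⟩ := hsgn
      have hroot : ∃ t : ℝ, 0 < t ∧ t < 1 ∧ q.eval t = 0 := by
        rcases lt_trichotomy x y with h | h | h
        · obtain ⟨t, ht, ht0⟩ := intermediate_value_Ioo h.le q.continuous.continuousOn
            (show (0 : ℝ) ∈ Set.Ioo (q.eval x) (q.eval y) from ⟨hxq, hyq⟩)
          exact ⟨t, hx.1.trans_lt ht.1, ht.2.trans_le hy.2, ht0⟩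
        · subst h; linarith
        · obtain ⟨t, ht, ht0⟩ := intermediate_value_Ioo' h.le q.continuous.continuousOn
            (show (0 : ℝ) ∈ Set.Ioo (q.eval x) (q.eval y) from ⟨hxq, hyq⟩)
          exact ⟨t, hy.1.trans_lt ht.1, ht.2.trans_le hx.2, ht0⟩
      obtain ⟨t, t0, t1, ht⟩ := hroot
      obtain ⟨q1, rfl⟩ := dvd_iff_isRoot.2 ht
      have hq10 : q1 ≠ 0 := right_ne_zero_of_mul hq0
      rw [natDegree_mul (X_sub_C_ne_zero t) hq10, natDegree_X_sub_C] at hq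
      obtain ⟨s, r, h1, h2, h3⟩ := ih q1 (by omega) hq10
      refine ⟨t ::ₘ s, r, ?_, ?_, h3⟩
      · rw [Multiset.map_cons, Multiset.prod_cons, mul_assoc, ← h1]
      · intro u hu
        rcases Multiset.mem_cons.1 hu with rfl | hu
        · exact ⟨t0, t1⟩
        · exact h2 u hu

lemma gs_even {Q : ℝ[X]} {m e : ℕ} (he : e = 0 ∨ e = 1) (hQ : Q.Monic)
    (hn : Q.natDegree = 2 * m + e) (hp : Q.comp (-X) = C ((-1) ^ (2 * m + e)) * Q) :
    ∃ q : ℝ[X], q.Monic ∧ q.natDegree = m ∧ Q = X ^ e * q.comp (X ^ 2) := by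
  let q : ℝ[X] := ∑ j ∈ Finset.range (m + 1), monomial j (Q.coeff (2 * j + e))
  have hq : ∀ j, q.coeff j = Q.coeff (2 * j + e) := by
    intro j
    simp only [q, finset_sum_coeff, coeff_monomial, Finset.sum_ite_eq', Finset.mem_range]
    split_ifs with h
    · rfl
    · rw [coeff_eq_zero_of_natDegree_lt (by omega)]
  have hzero : ∀ n, (n + e) % 2 = 1 → Q.coeff n = 0 := by
    intro n hne
    have h1 := congrArg (fun f => coeff f n) hp
    have h0 : (Q.comp (-X)).coeff n = Q.coeff n * (-1) ^ n := by
      have : (-X : ℝ[X]) = C (-1) * X := by simp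
      rw [this, comp_C_mul_X_coeff]
    simp only [coeff_C_mul, h0] at h1
    have h2 : (-1 : ℝ) ^ n * (-1) ^ (2 * m + e) = -1 := by
      rw [← pow_add]
      exact Odd.neg_one_pow (Nat.odd_iff.2 (by omega))
    have h3 : ((-1 : ℝ) ^ n) * (-1) ^ n = 1 := by rw [← mul_pow]; simp
    have : Q.coeff n = - Q.coeff n := by
      linear_combination (-1 : ℝ) ^ n * h1 - Q.coeff n * h3 + Q.coeff n * h2
    linarith
  have hdeg : q.natDegree = m := by
    refine natDegree_eq_of_le_of_coeff_ne_zero ?_ ?_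
    · rw [natDegree_le_iff_coeff_eq_zero]
      intro j hj
      rw [hq, coeff_eq_zero_of_natDegree_lt (by omega)]
    · rw [hq, ← hn]
      have : Q.coeff Q.natDegree = 1 := hQ
      rw [this]; exact one_ne_zero
  refine ⟨q, ?_, hdeg, ?_⟩
  · rw [Monic, leadingCoeff, hdeg, hq, ← hn]; exact hQ
  · rw [← expand_eq_comp_X_pow]
    ext n
    rw [coeff_X_pow_mul', coeff_expand (by norm_num)]
    split_ifs with h1 h2
    · rw [hq]; congr 1; omega
    · exact hzero n (by omega)
    · exact hzero n (by omega)

lemma gs_real {x : ℂ} {t : ℝ} (h0 : 0 ≤ t) (h1 : t ≤ 1) (h : x ^ 2 - (t : ℂ) = 0) :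
    x.im = 0 ∧ -1 ≤ x.re ∧ x.re ≤ 1 := by
  have hre := congrArg Complex.re h
  have him := congrArg Complex.im h
  simp [pow_two] at hre him
  have him' : x.im = 0 := by
    by_contra hne
    have : x.re = 0 := by
      have : x.re * x.im = 0 := by linarith
      exact (mul_eq_zero.1 this).resolve_right hne
    rw [this] at hre
    have := mul_self_pos.2 hne
    nlinarith
  rw [him'] at hre
  refine ⟨him', ?_, ?_⟩ <;> nlinarith

lemma gs_main (H : GsGood a I) {lam : ℝ} (hl : 0 ≤ lam) {e m : ℕ} (he : e = 0 ∨ e = 1)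
    {Q : ℝ[X]} (hQ : GsSob lam I (2 * m + e) Q) :
    ∀ z : ℂ, aeval z Q = 0 → z.im = 0 ∧ -1 ≤ z.re ∧ z.re ≤ 1 := by
  obtain ⟨hA, hB⟩ := gs_cone H hl e he m Q hQ
  have hL := gs_LI H hA hB
  obtain ⟨q, q1, q2, q3⟩ := gs_even he hQ.1 hQ.2.1 (gs_parity H hl hQ)
  obtain ⟨s, r, hqr, hs, hr⟩ := gs_factor m q q2 q1.ne_zero
  have hM := gs_multi hA hL s hs
  set P := (s.map (fun t => X - C t)).prod with hP
  have hPm : P.Monic := monic_multiset_prod_of_monic _ _ (fun t _ => monic_X_sub_C t)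
  have hPd : P.natDegree = Multiset.card s := by
    rw [hP, natDegree_multiset_prod_X_sub_C_eq_card]
  have hPc : (s.map (fun t => X ^ 2 - C t)).prod = P.comp (X ^ 2) := by
    rw [hP, multiset_prod_comp, Multiset.map_map]
    congr 1
    refine Multiset.map_congr rfl (fun t _ => ?_)
    simp
  have hrm : r.Monic := hPm.of_mul_monic_left (hqr ▸ q1)
  have hdeg : Multiset.card s + r.natDegree = m := by
    rw [← q2, hqr, hPm.natDegree_mul hrm, hPd]
  rw [hPc] at hM
  set F : ℝ[X] := (X ^ e * P.comp (X ^ 2)) * (X ^ e * P.comp (X ^ 2)) with hF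
  have hcomp0 : ∀ f : ℝ[X], f.Monic → f.comp (X ^ 2) ≠ 0 := by
    intro f hf
    exact (hf.comp (monic_X_pow 2) (by simp)).ne_zero
  have hF0 : F ≠ 0 := by
    have : (X ^ e * P.comp (X ^ 2) : ℝ[X]) ≠ 0 :=
      mul_ne_zero (monic_X_pow e).ne_zero (hcomp0 P hPm)
    exact mul_ne_zero this this
  have hFnn : ∀ x, 0 ≤ F.eval x := by
    intro x; rw [hF, eval_mul]; exact mul_self_nonneg _
  have hQP : Q * X ^ (2 * 0 + e) * P.comp (X ^ 2) = F * r.comp (X ^ 2) := by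
    rw [q3, hqr, mul_comp, hF]; ring
  have hsq : ∀ x ∈ Set.Icc (-1 : ℝ) 1, x ^ 2 ∈ Set.Icc (0 : ℝ) 1 := by
    intro x hx
    exact ⟨sq_nonneg x, by nlinarith [hx.1, hx.2]⟩
  -- roots of Q
  have hroots : (∀ z : ℂ, aeval (z ^ 2) r = 0 → z.im = 0 ∧ -1 ≤ z.re ∧ z.re ≤ 1) →
      ∀ z : ℂ, aeval z Q = 0 → z.im = 0 ∧ -1 ≤ z.re ∧ z.re ≤ 1 := by
    intro hr' z hz
    rw [q3, hqr, mul_comp, ← hPc, map_mul, map_mul, mul_eq_zero, mul_eq_zero] at hz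
    rcases hz with hz | hz | hz
    · rw [map_pow, aeval_X] at hz
      have : z = 0 := eq_zero_of_pow_eq_zero hz
      simp [this]
    · rw [map_multiset_prod, Multiset.prod_eq_zero_iff, Multiset.map_map, Multiset.mem_map] at hz
      obtain ⟨t, ht, ht0⟩ := hz
      obtain ⟨h0, h1⟩ := hs t ht
      refine gs_real h0.le h1.le (t := t) ?_
      simpa using ht0
    · apply hr' z
      rw [aeval_comp] at hz
      simpa using hz
  rcases Nat.lt_or_ge (Multiset.card s) m with hlt | hge
  swap
  · -- `r = 1`
    have : r = 1 := hrm.natDegree_eq_zero.1 (by omega)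
    apply hroots
    intro z hz
    simp [this] at hz
  have hI0 := (hM 0 0).1 (by omega)
  rw [pow_zero, mul_one, hQP] at hI0
  rcases hr with hr | hr
  · exfalso
    have := H.pos (F * r.comp (X ^ 2)) (mul_ne_zero hF0 (hcomp0 r hrm)) (by
      intro x hx
      rw [eval_mul, eval_comp, eval_pow, eval_X]
      exact mul_nonneg (hFnn x) (hr _ (hsq x hx)))
    linarith
  rcases Nat.lt_or_ge (Multiset.card s + 1) m with hlt2 | hge2
  · exfalso
    have h1 := (hM 1 0).1 (by omega)
    have h2 : Q * X ^ (2 * 0 + e) * (X ^ 2 - 1) ^ 1 * P.comp (X ^ 2)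
        = F * ((X - C 1) * r).comp (X ^ 2) := by
      rw [mul_comp, sub_comp, X_comp, C_comp, C_1]
      linear_combination (X ^ 2 - 1) * hQP
    rw [h2] at h1
    have := H.pos (F * ((X - C 1) * r).comp (X ^ 2))
      (mul_ne_zero hF0 (hcomp0 _ ((monic_X_sub_C 1).mul hrm))) (by
      intro x hx
      have h7 : (F * ((X - C 1) * r).comp (X ^ 2)).eval x
          = F.eval x * ((x ^ 2 - 1) * r.eval (x ^ 2)) := by
        rw [eval_mul, eval_comp, eval_mul (p := X - C 1), eval_pow, eval_X, eval_sub, eval_X,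
          eval_C]
      rw [h7]
      refine mul_nonneg (hFnn x) (mul_nonneg_of_nonpos_of_nonpos ?_ (hr _ (hsq x hx)))
      have := (hsq x hx).2
      linarith)
    linarith
  -- `r = X - u`
  obtain ⟨u, hu⟩ : ∃ u : ℝ, r = X - C u := by
    refine ⟨-r.coeff 0, ?_⟩
    rw [C_neg, sub_neg_eq_add]
    exact hrm.eq_X_add_C (by omega)
  have hu1 : 1 ≤ u := by
    have := hr 1 (by norm_num)
    rw [hu] at this
    simpa using this
  rcases hu1.eq_or_lt with hu1 | hu1
  · apply hroots
    intro z hz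
    refine gs_real zero_le_one le_rfl (t := 1) ?_
    rw [hu, ← hu1] at hz
    simpa using hz
  · exfalso
    have h1 := (hM 0 0).2 (by omega)
    have h2 : F * r.comp (X ^ 2) = (X ^ 2 - 1) * F + C (1 - u) * F := by
      rw [hu, sub_comp, X_comp, C_comp, C_sub, C_1]; ring
    rw [pow_zero, mul_one, hQP, h2, gsL_add, gsL_sq H, gsL_Cmul] at h1
    have h3 := H.Lpos F (fun x _ => hFnn x)
    have hIF := H.pos F hF0 (fun x _ => hFnn x)
    rcases H.ha.eq_or_lt with ha | ha
    · have hF1 : 0 < F.eval 1 := by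
        refine lt_of_le_of_ne (hFnn 1) ?_
        intro h0
        rw [hF, eval_mul, eval_mul, eval_pow, eval_X, one_pow, one_mul, eval_comp, eval_pow, eval_X,
          one_pow] at h0
        have h00 : P.eval 1 = 0 := mul_self_eq_zero.1 h0.symm
        rw [hP, eval_multiset_prod, Multiset.prod_eq_zero_iff, Multiset.map_map,
          Multiset.mem_map] at h00
        obtain ⟨t, ht, ht0⟩ := h00
        have := (hs t ht).2
        simp at ht0
        linarith
      have hF2 := hFnn (-1)
      rw [← ha, Real.rpow_zero] at h3
      rw [← ha] at h1
      have : 0 < gsL 0 I F := by linarith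
      nlinarith [mul_pos (sub_pos.2 hu1) this]
    · rw [Real.zero_rpow ha.ne', mul_zero] at h3
      nlinarith [mul_nonneg (sub_pos.2 hu1).le h3, mul_pos ha hIF]

end Algebra

/-- For `α ≥ 1/2` all zeros of the Gegenbauer–Sobolev polynomial lie in `[-1,1]`. -/
theorem gegSobolev_zeros_in_Icc (α lam : ℝ) (hα : 1/2 ≤ α) (hlam : 0 ≤ lam)
    (n : ℕ) (hn : 1 ≤ n)
    (Q : Polynomial ℝ) (hQ : IsMonicGegSobolev α lam n Q) :
    ∀ z : ℂ, Polynomial.aeval z Q = 0 →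
      z.im = 0 ∧ -1 ≤ z.re ∧ z.re ≤ 1 := by
  have ha : 0 ≤ α - 1 / 2 := by linarith
  obtain ⟨h1, h2, h3⟩ := hQ
  have hS : GsSob lam (gsI (α - 1 / 2) ha) n Q := by
    refine ⟨h1, h2, fun p hp => ?_⟩
    have := h3 p hp
    rw [sobInner, gsI_geg α ha, gsI_geg α ha] at this
    exact this
  have hn2 : n = 2 * (n / 2) + n % 2 := (Nat.div_add_mod n 2).symm
  rw [hn2] at hS
  exact gs_main (gsI_good _ ha) hlam (by omega) hS
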